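/- For every integer e ≥ 1 and general points: ℓ(L(8e, 8e−4, 6^{2e})) = 0 (virtual dimension −2e − 6), ℓ(L(8e+1, 8e−3, 6^{2e})) = 2 (virtual dimension −2e − 1), and ℓ(L(8e+2, 8e−2, 6^{2e})) = 5 (virtual dimension −2e + 4); in particular all three systems are special. -/

import Mathlib

open MvPolynomial

/-- The iterated partial derivative corresponding to the multi-index `ν`. -/
noncomputable def mderiv (ν : Fin 3 → ℕ) :
    MvPolynomial (Fin 3) ℂ →ₗ[ℂ] MvPolynomial (Fin 3) ℂ :=
  ((pderiv (R := ℂ) (0 : Fin 3)).toLinearMap ^ ν 0) ∘ₗ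
  ((pderiv (R := ℂ) (1 : Fin 3)).toLinearMap ^ ν 1) ∘ₗ
  ((pderiv (R := ℂ) (2 : Fin 3)).toLinearMap ^ ν 2)

/-- The linear system `L(d; m)` of homogeneous forms of degree `d` in three variables
all of whose partial derivatives of order `< m i` vanish at the point `p i`,
i.e. plane curves of degree `d` with multiplicity at least `m i` at `p i`. -/
noncomputable def linSys {k : ℕ} (p : Fin k → Fin 3 → ℂ) (d : ℕ) (m : Fin k → ℕ) :
    Submodule ℂ (MvPolynomial (Fin 3) ℂ) :=
  (homogeneousSubmodule (Fin 3) ℂ d) ⊓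
    ⨅ (i : Fin k), ⨅ (ν : Fin 3 → ℕ), ⨅ (_ : ν 0 + ν 1 + ν 2 < m i),
      LinearMap.ker ((aeval (p i)).toLinearMap ∘ₗ mderiv ν)

/-- The projective dimension `ℓ` of the linear system (`-1` means empty). -/
noncomputable def projDim {k : ℕ} (p : Fin k → Fin 3 → ℂ) (d : ℕ) (m : Fin k → ℕ) : ℤ :=
  (Module.finrank ℂ (linSys p d m) : ℤ) - 1

/-- The virtual dimension `v = d(d+3)/2 - ∑ mᵢ(mᵢ+1)/2`. -/
def virtDim {k : ℕ} (d : ℕ) (m : Fin k → ℕ) : ℤ :=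
  ((d : ℤ) * (d + 3)) / 2 - ∑ i : Fin k, ((m i : ℤ) * (m i + 1)) / 2

/-- The quasi-homogeneous multiplicity vector `(m₀, 6, …, 6)` on `n + 1` points. -/
def qh (n m0 : ℕ) : Fin (n + 1) → ℕ := fun i => if i = 0 then m0 else 6

/-- A property `Q` of configurations of `k` points of `ℙ²` (given by nonzero homogeneous
coordinate vectors) holds for points in general position: there is a nonzero polynomial
in the coordinates such that `Q` holds whenever it does not vanish. -/
def Generically (k : ℕ) (Q : (Fin k → Fin 3 → ℂ) → Prop) : Prop :=
  ∃ P : MvPolynomial (Fin k × Fin 3) ℂ, P ≠ 0 ∧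
    ∀ p : Fin k → Fin 3 → ℂ, (∀ i, p i ≠ 0) →
      eval (fun x => p x.1 x.2) P ≠ 0 → Q p


lemma pderiv_pderiv_comm (i j : Fin 3) (F : MvPolynomial (Fin 3) ℂ) :
    pderiv i (pderiv j F) = pderiv j (pderiv i F) := by
  have h : ⁅pderiv (R := ℂ) i, pderiv (R := ℂ) j⁆ = 0 := by
    refine MvPolynomial.derivation_ext fun k => ?_
    rw [Derivation.commutator_apply]
    simp only [pderiv_X, Pi.single_apply]
    split_ifs <;> simp
  have h' := DFunLike.congr_fun h F
  rw [Derivation.commutator_apply] at h'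
  exact sub_eq_zero.mp h'

lemma mderiv_apply (ν : Fin 3 → ℕ) (F : MvPolynomial (Fin 3) ℂ) :
    mderiv ν F = (pderiv 0)^[ν 0] ((pderiv 1)^[ν 1] ((pderiv 2)^[ν 2] F)) := by
  simp [mderiv, Module.End.coe_pow]

lemma mderiv_add_single (ν : Fin 3 → ℕ) (i : Fin 3) (F : MvPolynomial (Fin 3) ℂ) :
    mderiv (ν + Pi.single i 1) F = mderiv ν (pderiv i F) := by
  have hc (a b : Fin 3) : Function.Commute (pderiv (R := ℂ) a) (pderiv (R := ℂ) b) :=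
    fun F => pderiv_pderiv_comm a b F
  fin_cases i
  · simp only [mderiv_apply, Pi.add_apply, Fin.zero_eta, Pi.single_eq_same, ne_eq,
      Fin.reduceEq, not_false_eq_true, Pi.single_eq_of_ne, add_zero, Function.iterate_succ_apply]
    rw [((hc 2 0).iterate_left (ν 2)).eq, ((hc 1 0).iterate_left (ν 1)).eq]
  · simp only [mderiv_apply, Pi.add_apply, Fin.mk_one, Pi.single_eq_same, ne_eq,
      Fin.reduceEq, not_false_eq_true, Pi.single_eq_of_ne, add_zero, Function.iterate_succ_apply,
      zero_ne_one]
    rw [((hc 2 1).iterate_left (ν 2)).eq]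
  · simp [mderiv_apply]

/-- The polynomial `F` vanishes to order at least `m` at `p`. -/
def VanishesToOrder (p : Fin 3 → ℂ) (m : ℕ) (F : MvPolynomial (Fin 3) ℂ) : Prop :=
  ∀ ν : Fin 3 → ℕ, ν 0 + ν 1 + ν 2 < m → eval p (mderiv ν F) = 0

lemma mem_linSys {k : ℕ} {p : Fin k → Fin 3 → ℂ} {d : ℕ} {m : Fin k → ℕ}
    {F : MvPolynomial (Fin 3) ℂ} :
    F ∈ linSys p d m ↔ F.IsHomogeneous d ∧ ∀ i, VanishesToOrder (p i) (m i) F := by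
  simp [linSys, VanishesToOrder, Submodule.mem_iInf, aeval_eq_eval]

namespace VanishesToOrder

variable {p : Fin 3 → ℂ} {m n : ℕ} {F G : MvPolynomial (Fin 3) ℂ}

lemma zero_order (p : Fin 3 → ℂ) (F : MvPolynomial (Fin 3) ℂ) : VanishesToOrder p 0 F :=
  fun _ h => absurd h (Nat.not_lt_zero _)

lemma mono (h : VanishesToOrder p m F) (hnm : n ≤ m) : VanishesToOrder p n F :=
  fun ν hν => h ν (hν.trans_le hnm)

lemma succ_iff : VanishesToOrder p (m + 1) F ↔
    eval p F = 0 ∧ ∀ i, VanishesToOrder p m (pderiv i F) := by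
  constructor
  · intro h
    refine ⟨by simpa [mderiv_apply] using h 0 (by simp), fun i ν hν => ?_⟩
    rw [← mderiv_add_single]
    apply h
    fin_cases i <;> simp <;> omega
  · rintro ⟨h0, h1⟩ ν hν
    have key (i : Fin 3) (hi : 0 < ν i) : eval p (mderiv ν F) = 0 := by
      have e : ν = (ν - Pi.single i 1) + Pi.single i 1 := by
        ext j
        by_cases hj : j = i
        · subst hj; simp; omega
        · simp [hj]
      rw [e, mderiv_add_single]
      apply h1
      simp only [Pi.sub_apply]
      fin_cases i <;> simp at hi ⊢ <;> omega
    by_cases hz : ∃ i, 0 < ν i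
    · obtain ⟨i, hi⟩ := hz
      exact key i hi
    · push Not at hz
      have hz' (i) : ν i = 0 := Nat.le_zero.mp (hz i)
      simpa [mderiv_apply, hz'] using h0

lemma one_iff : VanishesToOrder p 1 F ↔ eval p F = 0 := by
  simp [succ_iff, zero_order]

protected lemma pderiv (h : VanishesToOrder p m F) (i : Fin 3) :
    VanishesToOrder p (m - 1) (pderiv i F) := by
  cases m with
  | zero => exact zero_order _ _
  | succ m => exact (succ_iff.mp h).2 i

lemma add (hF : VanishesToOrder p m F) (hG : VanishesToOrder p m G) :
    VanishesToOrder p m (F + G) := fun ν hν => by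
  rw [map_add, map_add, hF ν hν, hG ν hν, add_zero]

lemma smul (c : ℂ) (hF : VanishesToOrder p m F) : VanishesToOrder p m (c • F) := fun ν hν => by
  rw [map_smul, smul_eval, hF ν hν, mul_zero]

lemma mul (hF : VanishesToOrder p m F) (hG : VanishesToOrder p n G) :
    VanishesToOrder p (m + n) (F * G) := by
  induction hk : m + n generalizing m n F G with
  | zero => exact zero_order _ _
  | succ k ih =>
    rw [succ_iff]
    constructor
    · rw [map_mul]
      rcases Nat.eq_zero_or_pos m with hm | hm
      · rw [one_iff.mp (hG.mono (by omega)), mul_zero]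
      · rw [one_iff.mp (hF.mono hm), zero_mul]
    · intro i
      rw [pderiv_mul]
      refine add ?_ ?_
      · rcases Nat.eq_zero_or_pos m with hm | hm
        · exact ih (zero_order p _) (hG.mono (Nat.sub_le n 1)) (by omega)
        · exact ih (hF.pderiv i) hG (by omega)
      · rcases Nat.eq_zero_or_pos n with hn | hn
        · exact ih (hF.mono (Nat.sub_le m 1)) (zero_order p _) (by omega)
        · exact ih hF (hG.pderiv i) (by omega)

lemma pow (hF : VanishesToOrder p m F) (k : ℕ) : VanishesToOrder p (k * m) (F ^ k) := by
  induction k with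
  | zero => simpa using zero_order _ _
  | succ k ih => simpa [pow_succ, add_mul] using ih.mul hF

end VanishesToOrder

lemma linSys_mul {k d d' : ℕ} {p : Fin k → Fin 3 → ℂ} {m m' : Fin k → ℕ}
    {F G : MvPolynomial (Fin 3) ℂ} (hF : F ∈ linSys p d m) (hG : G ∈ linSys p d' m') :
    F * G ∈ linSys p (d + d') (m + m') := by
  rw [mem_linSys] at *
  exact ⟨hF.1.mul hG.1, fun i => (hF.2 i).mul (hG.2 i)⟩

lemma linSys_pow {k d : ℕ} {p : Fin k → Fin 3 → ℂ} {m : Fin k → ℕ}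
    {F : MvPolynomial (Fin 3) ℂ} (hF : F ∈ linSys p d m) (a : ℕ) :
    F ^ a ∈ linSys p (a * d) (a • m) := by
  rw [mem_linSys] at *
  refine ⟨?_, fun i => (hF.2 i).pow a⟩
  rw [mul_comm]
  exact hF.1.pow a

instance linSys_finite {k : ℕ} (p : Fin k → Fin 3 → ℂ) (d : ℕ) (m : Fin k → ℕ) :
    Module.Finite ℂ (linSys p d m) :=
  have : Module.Finite ℂ (homogeneousSubmodule (Fin 3) ℂ d) :=
    Module.Finite.iff_fg.mpr (homogeneousSubmodule_fg (Fin 3) ℂ d)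
  Submodule.finiteDimensional_of_le (inf_le_left : linSys p d m ≤ _)

lemma finrank_linSys_le_of_mul {k d d' : ℕ} {p : Fin k → Fin 3 → ℂ} {m m' : Fin k → ℕ}
    {G : MvPolynomial (Fin 3) ℂ} (hG : G ∈ linSys p d' m') (hG0 : G ≠ 0) :
    Module.finrank ℂ (linSys p d m) ≤ Module.finrank ℂ (linSys p (d' + d) (m' + m)) := by
  have hmap : (linSys p d m).map (LinearMap.mulLeft ℂ G) ≤ linSys p (d' + d) (m' + m) := by
    rintro _ ⟨F, hF, rfl⟩
    exact linSys_mul hG hF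
  have hinj : Function.Injective (LinearMap.mulLeft ℂ G) := fun F F' h =>
    mul_left_cancel₀ hG0 h
  rw [(Submodule.equivMapOfInjective _ hinj (linSys p d m)).finrank_eq]
  exact Submodule.finrank_mono hmap

lemma exists_generic_ker_le {σ V κ : Type*} [Finite κ] [AddCommGroup V] [Module ℂ V]
    [Module.Finite ℂ V] (L : (σ → ℂ) → V →ₗ[ℂ] (κ → ℂ))
    (Q : κ → V → MvPolynomial σ ℂ) (hQ : ∀ c v q, eval q (Q c v) = L q v c)
    (q₀ : σ → ℂ) {r : ℕ} (hr : Module.finrank ℂ (LinearMap.ker (L q₀)) ≤ r) :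
    ∃ P : MvPolynomial σ ℂ, P ≠ 0 ∧ ∀ q, eval q P ≠ 0 →
      Module.finrank ℂ (LinearMap.ker (L q)) ≤ r := by
  classical
  have := Fintype.ofFinite κ
  set K := LinearMap.ker (L q₀)
  obtain ⟨π, hπ⟩ := K.subtype.exists_leftInverse_of_injective K.ker_subtype
  have hπK (v : V) (hv : v ∈ K) : (π v : V) = v := by
    have := congrArg Subtype.val (LinearMap.congr_fun hπ ⟨v, hv⟩)
    simpa using this
  have hinj : LinearMap.ker ((L q₀).prod π) = ⊥ := by
    rw [LinearMap.ker_prod, eq_bot_iff]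
    rintro v ⟨hv1, hv2⟩
    have := hπK v hv1
    rw [show π v = 0 from hv2] at this
    simpa using this.symm
  obtain ⟨T, hT⟩ := ((L q₀).prod π).exists_leftInverse_of_injective hinj
  let b := Module.finBasis ℂ V
  let t : κ → V := fun c => T (Pi.single c 1, 0)
  have hTform (q : σ → ℂ) (v : V) :
      T ((L q).prod π v) = ∑ c, L q v c • t c + T (0, π v) := by
    have h1 : ((L q).prod π v) = ∑ c, L q v c • ((Pi.single c 1, 0) : (κ → ℂ) × K) + (0, π v) := by
      refine Prod.ext ?_ ?_
      · simp only [LinearMap.prod_apply, Function.prod, Prod.smul_mk, smul_zero, Prod.fst_add,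
          Prod.fst_sum, add_zero]
        ext c
        simp [Finset.sum_apply, Pi.single_apply]
      · simp [Prod.snd_sum]
    rw [h1, map_add, map_sum]
    simp only [t, map_smul]
  let A : Matrix (Fin (Module.finrank ℂ V)) (Fin (Module.finrank ℂ V)) (MvPolynomial σ ℂ) :=
    Matrix.of fun i j => ∑ c, Q c (b j) * C (b.repr (t c) i) + C (b.repr (T (0, π (b j))) i)
  have hA (q : σ → ℂ) : (eval q) A.det = LinearMap.det (T ∘ₗ (L q).prod π) := by
    rw [← LinearMap.det_toMatrix b, RingHom.map_det]
    congr 1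
    ext i j
    rw [LinearMap.toMatrix_apply, LinearMap.comp_apply, hTform]
    simp [A, hQ]
  refine ⟨A.det, ?_, fun q hq => ?_⟩
  · intro h0
    have := hA q₀
    rw [hT, h0] at this
    simp at this
  · rw [hA] at hq
    have hbot : LinearMap.ker (T ∘ₗ (L q).prod π) = ⊥ := by
      by_contra hne
      exact hq (LinearMap.det_eq_zero_iff_ker_ne_bot.mpr hne)
    refine le_trans (LinearMap.finrank_le_finrank_of_injective
      (f := π.domRestrict (LinearMap.ker (L q))) ?_) hr
    rw [← LinearMap.ker_eq_bot, eq_bot_iff]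
    rintro ⟨v, hv⟩ hv'
    have : v ∈ LinearMap.ker (T ∘ₗ (L q).prod π) := by
      have h1 : L q v = 0 := hv
      have h2 : π v = 0 := hv'
      rw [LinearMap.mem_ker, LinearMap.comp_apply, LinearMap.prod_apply, Function.prod, h1, h2]
      exact map_zero T
    rw [hbot] at this
    exact Subtype.ext this

lemma eval_rename_prodMk {k : ℕ} (q : Fin k × Fin 3 → ℂ) (i : Fin k)
    (F : MvPolynomial (Fin 3) ℂ) :
    eval q (rename (Prod.mk i) F) = eval (fun j => q (i, j)) F := by
  rw [eval_rename]
  rfl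

/-- The linear conditions cutting out `linSys p d m` in the space of forms of degree `d`. -/
noncomputable def linSysConditions {k : ℕ} (d : ℕ) (m : Fin k → ℕ) (p : Fin k → Fin 3 → ℂ) :
    homogeneousSubmodule (Fin 3) ℂ d →ₗ[ℂ]
      ((Σ i : Fin k, {ν : Fin 3 → ℕ // ν 0 + ν 1 + ν 2 < m i}) → ℂ) :=
  LinearMap.pi fun c => (aeval (p c.1)).toLinearMap ∘ₗ mderiv c.2.1 ∘ₗ Submodule.subtype _

lemma linSysConditions_apply {k d : ℕ} {m : Fin k → ℕ} (p : Fin k → Fin 3 → ℂ)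
    (F : homogeneousSubmodule (Fin 3) ℂ d) (c) :
    linSysConditions d m p F c = eval (p c.1) (mderiv c.2.1 F.1) := by
  simp [linSysConditions, aeval_eq_eval]

lemma finrank_ker_linSysConditions {k d : ℕ} {m : Fin k → ℕ} (p : Fin k → Fin 3 → ℂ) :
    Module.finrank ℂ (LinearMap.ker (linSysConditions d m p)) =
      Module.finrank ℂ (linSys p d m) := by
  have h : (LinearMap.ker (linSysConditions d m p)).map (Submodule.subtype _) =
      linSys p d m := by
    ext F
    rw [mem_linSys, Submodule.mem_map]
    constructor
    · rintro ⟨G, hG, rfl⟩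
      refine ⟨G.2, fun i ν hν => ?_⟩
      rw [LinearMap.mem_ker] at hG
      have h := congrFun hG ⟨i, ν, hν⟩
      rwa [linSysConditions_apply] at h
    · rintro ⟨hF, hF'⟩
      refine ⟨⟨F, hF⟩, ?_, rfl⟩
      rw [LinearMap.mem_ker]
      ext c
      rw [linSysConditions_apply]
      exact hF' c.1 c.2.1 c.2.2
  rw [← h, Submodule.finrank_map_subtype_eq]

lemma exists_generic_finrank_linSys_le {k : ℕ} (d : ℕ) (m : Fin k → ℕ)
    (p₀ : Fin k → Fin 3 → ℂ) {r : ℕ} (hr : Module.finrank ℂ (linSys p₀ d m) ≤ r) :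
    ∃ P : MvPolynomial (Fin k × Fin 3) ℂ, P ≠ 0 ∧
      ∀ p : Fin k → Fin 3 → ℂ, eval (fun x => p x.1 x.2) P ≠ 0 →
        Module.finrank ℂ (linSys p d m) ≤ r := by
  have : Module.Finite ℂ (homogeneousSubmodule (Fin 3) ℂ d) :=
    Module.Finite.iff_fg.mpr (homogeneousSubmodule_fg (Fin 3) ℂ d)
  have (i : Fin k) : Finite {ν : Fin 3 → ℕ // ν 0 + ν 1 + ν 2 < m i} := by
    refine Set.Finite.subset (Set.finite_Iic (fun _ => m i)) fun ν hν j => ?_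
    have hν' : ν 0 + ν 1 + ν 2 < m i := hν
    fin_cases j <;> simp <;> omega
  obtain ⟨P, hP0, hP⟩ := exists_generic_ker_le
    (V := homogeneousSubmodule (Fin 3) ℂ d)
    (κ := Σ i : Fin k, {ν : Fin 3 → ℕ // ν 0 + ν 1 + ν 2 < m i})
    (fun q : Fin k × Fin 3 → ℂ => linSysConditions d m fun i j => q (i, j))
    (fun c F => rename (Prod.mk c.1) (mderiv c.2.1 F.1))
    (fun c F q => by rw [eval_rename_prodMk, linSysConditions_apply]) (fun x => p₀ x.1 x.2)
    (r := r) (by rwa [finrank_ker_linSysConditions])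
  refine ⟨P, hP0, fun p hp => ?_⟩
  have h := hP (fun x => p x.1 x.2) hp
  rwa [finrank_ker_linSysConditions] at h

/-- Polynomials `f(x, z)` of degree less than `K` in `z` and total degree at most `d` such that
the coefficient of `w ^ j` in `f(x, w + x ^ e)` is divisible by `H(x) ^ (m - j)`. -/
noncomputable def ruledSystem (e d K m : ℕ) (H : Polynomial ℂ) :
    Submodule ℂ (Polynomial (Polynomial ℂ)) where
  carrier := {f | (∀ j, K ≤ j → f.coeff j = 0) ∧ (∀ j i, d < i + j → (f.coeff j).coeff i = 0) ∧
    ∀ j, H ^ (m - j) ∣ (Polynomial.taylor (Polynomial.X ^ e) f).coeff j}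
  add_mem' := by
    rintro f g ⟨h1, h2, h3⟩ ⟨h1', h2', h3'⟩
    refine ⟨fun j hj => by simp [h1 j hj, h1' j hj],
      fun j i hij => by simp [h2 j i hij, h2' j i hij], fun j => ?_⟩
    rw [map_add, Polynomial.coeff_add]
    exact dvd_add (h3 j) (h3' j)
  zero_mem' := by simp
  smul_mem' := by
    rintro c f ⟨h1, h2, h3⟩
    have hc : c • f = Polynomial.C (Polynomial.C c) * f := by
      rw [← Polynomial.smul_eq_C_mul, ← Polynomial.algebraMap_eq, algebraMap_smul]
    refine ⟨fun j hj => by simp [h1 j hj], fun j i hij => by simp [h2 j i hij], fun j => ?_⟩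
    rw [hc, Polynomial.taylor_mul, Polynomial.taylor_C, Polynomial.coeff_C_mul]
    exact (h3 j).mul_left _

lemma coeff_eval_X_pow_eq_zero {e d K i : ℕ} {f : Polynomial (Polynomial ℂ)} (he : 1 ≤ e)
    (h1 : ∀ j, K + 1 ≤ j → f.coeff j = 0) (h2 : ∀ j i, d < i + j → (f.coeff j).coeff i = 0)
    (hi : d + e * K < i + K) : (f.eval (Polynomial.X ^ e)).coeff i = 0 := by
  have hdeg : f.natDegree < K + 1 := by
    rw [Nat.lt_succ_iff, Polynomial.natDegree_le_iff_coeff_eq_zero]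
    exact fun j hj => h1 j hj
  rw [Polynomial.eval_eq_sum_range' hdeg, Polynomial.finsetSum_coeff]
  refine Finset.sum_eq_zero fun j hj => ?_
  rw [← pow_mul, Polynomial.coeff_mul_X_pow']
  split_ifs with hji
  · apply h2
    obtain ⟨e, rfl⟩ := Nat.exists_eq_add_of_le' he
    have hjK : e * j ≤ e * K := Nat.mul_le_mul_left _ (Nat.lt_succ_iff.mp (Finset.mem_range.mp hj))
    rw [add_one_mul] at *
    omega
  · rfl

lemma mem_ruledSystem_of_mul {e d K m : ℕ} {H : Polynomial ℂ} {g : Polynomial (Polynomial ℂ)}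
    (he : 1 ≤ e)
    (h : (Polynomial.X - Polynomial.C (Polynomial.X ^ e)) * g ∈ ruledSystem e (d + e) (K + 1) m H) :
    g ∈ ruledSystem e d K (m - 1) H := by
  obtain ⟨h1, h2, h3⟩ := h
  have hc0 : ((Polynomial.X - Polynomial.C (Polynomial.X ^ e)) * g).coeff 0 =
      -(g.coeff 0 * Polynomial.X ^ e) := by
    rw [sub_mul, Polynomial.coeff_sub, Polynomial.coeff_X_mul_zero, Polynomial.coeff_C_mul,
      zero_sub, mul_comm]
  have hcs (j : ℕ) : ((Polynomial.X - Polynomial.C (Polynomial.X ^ e)) * g).coeff (j + 1) =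
      g.coeff j - g.coeff (j + 1) * Polynomial.X ^ e := by
    rw [sub_mul, Polynomial.coeff_sub, Polynomial.coeff_X_mul, Polynomial.coeff_C_mul, mul_comm]
  refine ⟨?_, ?_, fun j => ?_⟩
  · have hstep (j : ℕ) (hj : K ≤ j) : g.coeff j = g.coeff (j + 1) * Polynomial.X ^ e := by
      have := h1 (j + 1) (by omega)
      rwa [hcs, sub_eq_zero] at this
    have hpow (n j : ℕ) (hj : K ≤ j) : g.coeff (j + n) = 0 → g.coeff j = 0 := by
      induction n with
      | zero => exact id
      | succ n ih => exact fun h => ih (by rw [hstep _ (by omega), add_assoc, h, zero_mul])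
    exact fun j hj => hpow (g.natDegree + 1) j hj
      (Polynomial.coeff_eq_zero_of_natDegree_lt (by omega))
  · intro j
    induction j with
    | zero =>
      intro i hi
      have := h2 0 (i + e) (by omega)
      rwa [hc0, Polynomial.coeff_neg, Polynomial.coeff_mul_X_pow, neg_eq_zero] at this
    | succ j ih =>
      intro i hi
      have := h2 (j + 1) (i + e) (by omega)
      rw [hcs, Polynomial.coeff_sub, Polynomial.coeff_mul_X_pow, ih (i + e) (by omega)] at this
      simpa using this
  · have := h3 (j + 1)
    rw [Polynomial.taylor_mul] at this
    simp only [map_sub, Polynomial.taylor_X, Polynomial.taylor_C, add_sub_cancel_right,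
      Polynomial.coeff_X_mul] at this
    rwa [Nat.sub_sub, Nat.add_comm 1 j]

lemma rank_ruledSystem_le {e d K m r : ℕ} {H : Polynomial ℂ} (he : 1 ≤ e) (hH : H.Monic)
    (h : d + e + e * K + 1 ≤ m * H.natDegree + r + K) :
    Module.rank ℂ (ruledSystem e (d + e) (K + 1) m H) ≤
      r + Module.rank ℂ (ruledSystem e d K (m - 1) H) := by
  set W := ruledSystem e (d + e) (K + 1) m H
  let φ : Polynomial (Polynomial ℂ) →ₗ[ℂ] Polynomial ℂ :=
    (Polynomial.leval (Polynomial.X ^ e)).restrictScalars ℂ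
  have hrank := LinearMap.rank_range_add_rank_ker (R := ℂ) (M := W) (M₁ := Polynomial ℂ)
    (φ.domRestrict W)
  rw [← hrank]
  refine add_le_add ?_ ?_
  · have hle : LinearMap.range (φ.domRestrict W) ≤
        (Polynomial.degreeLT ℂ r).map (LinearMap.mulLeft ℂ (H ^ m)) := by
      rintro _ ⟨⟨f, h1, h2, h3⟩, rfl⟩
      obtain ⟨q, hq⟩ := h3 0
      rw [Polynomial.taylor_coeff_zero, Nat.sub_zero] at hq
      refine ⟨q, ?_, hq.symm⟩
      by_cases hq0 : q = 0
      · rw [hq0]; exact Submodule.zero_mem _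
      have hdeg : (f.eval (Polynomial.X ^ e)).natDegree ≤ d + e + e * K - K := by
        rw [Polynomial.natDegree_le_iff_coeff_eq_zero]
        intro i hi
        exact coeff_eval_X_pow_eq_zero he h1 h2 (by omega)
      rw [hq, (hH.pow m).natDegree_mul' hq0, hH.natDegree_pow] at hdeg
      have hKe : K ≤ e * K := Nat.le_mul_of_pos_left K he
      exact Polynomial.mem_degreeLT.mpr
        (Polynomial.degree_le_natDegree.trans_lt (by exact_mod_cast (by omega)))
    refine (Submodule.rank_mono hle).trans ((rank_map_le _ _).trans ?_)
    rw [(Polynomial.degreeLTEquiv ℂ r).rank_eq]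
    simp
  · have hinj : Function.Injective W.subtype := Subtype.val_injective
    rw [(Submodule.equivMapOfInjective _ hinj _).rank_eq]
    refine (Submodule.rank_mono ?_).trans (rank_map_le (LinearMap.mulLeft ℂ
      (Polynomial.X - Polynomial.C (Polynomial.X ^ e) : Polynomial (Polynomial ℂ))) _)
    rintro _ ⟨⟨f, hf⟩, hf0, rfl⟩
    have hroot : f.IsRoot (Polynomial.X ^ e) := hf0
    obtain ⟨g, rfl⟩ := Polynomial.dvd_iff_isRoot.mpr hroot
    exact ⟨g, mem_ruledSystem_of_mul he hf, rfl⟩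

lemma ruledSystem_zero (e d m : ℕ) (H : Polynomial ℂ) : ruledSystem e d 0 m H = ⊥ := by
  rw [eq_bot_iff]
  rintro f ⟨h1, -, -⟩
  exact Polynomial.ext fun j => h1 j (Nat.zero_le j)

lemma rank_ruledSystem_special {e c : ℕ} {H : Polynomial ℂ} (he : 1 ≤ e) (hH : H.Monic)
    (hdeg : H.natDegree = 2 * e) :
    Module.rank ℂ (ruledSystem e (8 * e + c) 5 6 H) ≤
      ((c - 3 + ((c - 2) + ((c - 1) + (c + (c + 1)))) : ℕ) : Cardinal) := by
  have h0 := rank_ruledSystem_le (e := e) (d := 7 * e + c) (K := 4) (m := 6) (r := c - 3) he hH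
    (by omega)
  have h1 := rank_ruledSystem_le (e := e) (d := 6 * e + c) (K := 3) (m := 5) (r := c - 2) he hH
    (by omega)
  have h2 := rank_ruledSystem_le (e := e) (d := 5 * e + c) (K := 2) (m := 4) (r := c - 1) he hH
    (by omega)
  have h3 := rank_ruledSystem_le (e := e) (d := 4 * e + c) (K := 1) (m := 3) (r := c) he hH
    (by omega)
  have h4 := rank_ruledSystem_le (e := e) (d := 3 * e + c) (K := 0) (m := 2) (r := c + 1) he hH
    (by omega)
  rw [ruledSystem_zero, rank_bot, add_zero] at h4
  rw [show 7 * e + c + e = 8 * e + c by ring] at h0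
  rw [show 6 * e + c + e = 7 * e + c by ring] at h1
  rw [show 5 * e + c + e = 6 * e + c by ring] at h2
  rw [show 4 * e + c + e = 5 * e + c by ring] at h3
  rw [show 3 * e + c + e = 4 * e + c by ring] at h4
  push_cast only [Nat.cast_add] at *
  exact h0.trans (add_le_add le_rfl (h1.trans (add_le_add le_rfl (h2.trans
    (add_le_add le_rfl (h3.trans (add_le_add le_rfl h4)))))))

lemma X_sub_C_pow_dvd_of_derivative {f : Polynomial ℂ} {t : ℂ} {m : ℕ} (h0 : f.eval t = 0)
    (h : (Polynomial.X - Polynomial.C t) ^ m ∣ Polynomial.derivative f) :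
    (Polynomial.X - Polynomial.C t) ^ (m + 1) ∣ f := by
  by_cases hf : f = 0
  · simp [hf]
  have hroot : f.IsRoot t := h0
  have hpos : 0 < f.rootMultiplicity t := (Polynomial.rootMultiplicity_pos hf).mpr hroot
  by_cases hd : Polynomial.derivative f = 0
  · obtain ⟨c, rfl⟩ : ∃ c, f = Polynomial.C c :=
      ⟨_, Polynomial.eq_C_of_natDegree_eq_zero (Polynomial.derivative_eq_zero.mp hd)⟩
    simp at h0
    simp [h0] at hf
  · rw [← Polynomial.le_rootMultiplicity_iff hd,
      Polynomial.derivative_rootMultiplicity_of_root hroot] at h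
    rw [← Polynomial.le_rootMultiplicity_iff hf]
    omega

lemma derivative_aeval {A : Type*} [CommRing A] [Algebra ℂ A] (γ : Fin 3 → Polynomial A)
    (F : MvPolynomial (Fin 3) ℂ) :
    Polynomial.derivative (aeval γ F) =
      ∑ i, aeval γ (pderiv i F) * Polynomial.derivative (γ i) := by
  induction F using MvPolynomial.induction_on with
  | C a =>
    rw [← algebraMap_eq, AlgHom.commutes, Polynomial.algebraMap_apply]
    simp [algebraMap_eq]
  | add F G hF hG => simp only [map_add, hF, hG, add_mul, Finset.sum_add_distrib]
  | mul_X F j hF =>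
    have h (i : Fin 3) : aeval γ (pderiv i (F * X j)) * Polynomial.derivative (γ i) =
        aeval γ (pderiv i F) * Polynomial.derivative (γ i) * γ j +
          if i = j then aeval γ F * Polynomial.derivative (γ i) else 0 := by
      rw [pderiv_mul, pderiv_X, map_add, map_mul, map_mul, aeval_X]
      split_ifs with hij
      · subst hij
        rw [Pi.single_eq_same, map_one]
        ring
      · rw [Pi.single_eq_of_ne' hij, map_zero]
        ring
    rw [map_mul, aeval_X, Polynomial.derivative_mul, hF, Finset.sum_congr rfl fun i _ => h i,
      Finset.sum_add_distrib, Finset.sum_mul, Finset.sum_ite_eq' Finset.univ j,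
      if_pos (Finset.mem_univ j)]

lemma VanishesToOrder.pow_dvd_aeval {p : Fin 3 → ℂ} {γ : Fin 3 → Polynomial ℂ} {t : ℂ}
    (hγ : ∀ i, (γ i).eval t = p i) {m : ℕ} {F : MvPolynomial (Fin 3) ℂ}
    (hF : VanishesToOrder p m F) : (Polynomial.X - Polynomial.C t) ^ m ∣ aeval γ F := by
  induction m generalizing F with
  | zero => simp
  | succ m ih =>
    rw [succ_iff] at hF
    refine X_sub_C_pow_dvd_of_derivative ?_ ?_
    · have h : (Polynomial.aeval t).comp (aeval γ) = aeval p := by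
        refine MvPolynomial.algHom_ext fun i => ?_
        simp [hγ, Polynomial.coe_aeval_eq_eval]
      have := DFunLike.congr_fun h F
      rw [AlgHom.comp_apply, Polynomial.coe_aeval_eq_eval, aeval_eq_eval] at this
      rw [this]
      exact hF.1
    · rw [derivative_aeval]
      exact Finset.dvd_sum fun i _ => (ih (hF.2 i)).mul_right _

/-- The dehomogenization `F(x, y, z) ↦ F(x, 1, z)`, as a polynomial in `z` over `ℂ[x]`. -/
noncomputable def dehomogenize : MvPolynomial (Fin 3) ℂ →ₐ[ℂ] Polynomial (Polynomial ℂ) :=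
  aeval ![Polynomial.C Polynomial.X, 1, Polynomial.X]

lemma coeff_coeff_dehomogenize (F : MvPolynomial (Fin 3) ℂ) (i j : ℕ) :
    ((dehomogenize F).coeff j).coeff i =
      ∑ s ∈ F.support, if s 0 = i ∧ s 2 = j then F.coeff s else 0 := by
  conv_lhs => rw [F.as_sum]
  rw [map_sum, Polynomial.finsetSum_coeff, Polynomial.finsetSum_coeff]
  refine Finset.sum_congr rfl fun s _ => ?_
  rw [dehomogenize, aeval_monomial, Finsupp.prod_fintype _ _ (fun _ => pow_zero _),
    Fin.prod_univ_three, Polynomial.algebraMap_apply, Polynomial.algebraMap_eq]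
  simp only [Matrix.cons_val_zero, Matrix.cons_val_one, Matrix.cons_val, one_pow, mul_one]
  rw [← mul_assoc, ← Polynomial.C_pow, ← Polynomial.C_mul, Polynomial.coeff_C_mul,
    Polynomial.coeff_X_pow]
  by_cases h : s 2 = j
  · rw [if_pos h.symm, mul_one]
    simp [Polynomial.coeff_X_pow, h, eq_comm]
  · rw [if_neg (Ne.symm h), mul_zero]
    simp [h]

lemma degree_fin_three (s : Fin 3 →₀ ℕ) : s.degree = s 0 + s 1 + s 2 := by
  rw [Finsupp.degree_eq_sum, Fin.sum_univ_three]

lemma sum_eq_of_mem_support {F : MvPolynomial (Fin 3) ℂ} {d : ℕ} (hF : F.IsHomogeneous d)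
    {s : Fin 3 →₀ ℕ} (hs : F.coeff s ≠ 0) : s 0 + s 1 + s 2 = d := by
  rw [← degree_fin_three]
  by_contra h
  exact hs (hF.coeff_eq_zero h)

lemma coeff_coeff_dehomogenize_eq_coeff {F : MvPolynomial (Fin 3) ℂ} {d : ℕ}
    (hF : F.IsHomogeneous d) {s : Fin 3 →₀ ℕ} (hs : s 0 + s 1 + s 2 = d) :
    ((dehomogenize F).coeff (s 2)).coeff (s 0) = F.coeff s := by
  rw [coeff_coeff_dehomogenize, Finset.sum_eq_single s]
  · simp
  · intro t ht hts
    refine if_neg fun h => hts ?_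
    have := sum_eq_of_mem_support hF (mem_support_iff.mp ht)
    ext i
    fin_cases i
    · exact h.1
    · change t 1 = s 1
      omega
    · exact h.2
  · simp

lemma VanishesToOrder.coeff_eq_zero {F : MvPolynomial (Fin 3) ℂ} {d m : ℕ}
    (hF : F.IsHomogeneous d) (h : VanishesToOrder ![0, 0, 1] m F) {s : Fin 3 →₀ ℕ}
    (hs : s 0 + s 1 < m) : F.coeff s = 0 := by
  induction m generalizing F d s with
  | zero => omega
  | succ m ih =>
    obtain ⟨h0, h1⟩ := succ_iff.mp h
    have key (i : Fin 3) (hi : 0 < s i) (hs' : (s - Finsupp.single i 1 : Fin 3 →₀ ℕ) 0 +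
        (s - Finsupp.single i 1 : Fin 3 →₀ ℕ) 1 < m) : F.coeff s = 0 := by
      have h2 := ih hF.pderiv (h1 i) hs'
      rw [coeff_pderiv] at h2
      have e : s - Finsupp.single i 1 + Finsupp.single i 1 = s :=
        tsub_add_cancel_of_le (Finsupp.single_le_iff.mpr hi)
      rw [e] at h2
      refine (mul_eq_zero.mp h2).resolve_right ?_
      exact Nat.cast_add_one_ne_zero _
    by_cases hs0 : 0 < s 0
    · refine key 0 hs0 ?_
      simp
      omega
    by_cases hs1 : 0 < s 1
    · refine key 1 hs1 ?_
      simp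
      omega
    · by_contra hne
      have hd := sum_eq_of_mem_support hF hne
      rw [eval_eq', Finset.sum_eq_single s] at h0
      · rw [Fin.prod_univ_three] at h0
        simp only [show s 0 = 0 by omega, show s 1 = 0 by omega] at h0
        simp at h0
        exact hne h0
      · intro t ht hts
        have ht' := sum_eq_of_mem_support hF (mem_support_iff.mp ht)
        rw [Fin.prod_univ_three]
        simp only [Matrix.cons_val_zero, Matrix.cons_val_one, Matrix.cons_val, one_pow, mul_one]
        by_cases ht0 : t 0 = 0
        · by_cases ht1 : t 1 = 0
          · refine absurd ?_ hts
            ext i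
            fin_cases i <;> simp <;> omega
          · simp [ht1]
        · simp [ht0]
      · intro hs
        rw [notMem_support_iff.mp hs, zero_mul]

lemma derivative_dehomogenize (F : MvPolynomial (Fin 3) ℂ) :
    Polynomial.derivative (dehomogenize F) = dehomogenize (pderiv 2 F) := by
  rw [dehomogenize, derivative_aeval, Fin.sum_univ_three]
  simp

lemma pow_dvd_coeff_taylor_dehomogenize {F : MvPolynomial (Fin 3) ℂ} {e m : ℕ} {t : ℂ}
    (hF : VanishesToOrder ![t, 1, t ^ e] m F) (j : ℕ) :
    (Polynomial.X - Polynomial.C t) ^ (m - j) ∣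
      (Polynomial.taylor (Polynomial.X ^ e) (dehomogenize F)).coeff j := by
  have hiter (j : ℕ) : VanishesToOrder ![t, 1, t ^ e] (m - j) ((pderiv 2)^[j] F) := by
    induction j with
    | zero => exact hF
    | succ j ih =>
      rw [Function.iterate_succ_apply', ← Nat.sub_sub]
      exact ih.pderiv 2
  have hder (j : ℕ) : Polynomial.derivative^[j] (dehomogenize F) =
      dehomogenize ((pderiv 2)^[j] F) := by
    induction j with
    | zero => rfl
    | succ j ih => rw [Function.iterate_succ_apply', ih, derivative_dehomogenize,
        Function.iterate_succ_apply']
  have heval (G : MvPolynomial (Fin 3) ℂ) : (dehomogenize G).eval (Polynomial.X ^ e) =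
      aeval ![Polynomial.X, 1, Polynomial.X ^ e] G := by
    have h : ((Polynomial.aeval (Polynomial.X ^ e : Polynomial ℂ)).restrictScalars ℂ).comp
        dehomogenize = aeval ![Polynomial.X, 1, Polynomial.X ^ e] := by
      refine MvPolynomial.algHom_ext fun i => ?_
      fin_cases i <;> simp [dehomogenize]
    have := DFunLike.congr_fun h G
    simpa [Polynomial.coe_aeval_eq_eval] using this
  have hdvd := (hiter j).pow_dvd_aeval (γ := ![Polynomial.X, 1, Polynomial.X ^ e]) (t := t)
    (fun i => by fin_cases i <;> simp)
  rw [← heval, ← hder, ← Polynomial.factorial_smul_hasseDeriv, LinearMap.smul_apply,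
    Polynomial.eval_smul, ← Polynomial.taylor_coeff, nsmul_eq_mul] at hdvd
  have hu : IsUnit ((j.factorial : ℕ) : Polynomial ℂ) := by
    rw [← Polynomial.C_eq_natCast, Polynomial.isUnit_C, isUnit_iff_ne_zero]
    exact_mod_cast j.factorial_ne_zero
  exact hu.dvd_mul_left.mp hdvd

/-- The points `(0, 0, 1)` and `(i, 1, i ^ e)` for `i = 0, …, n - 1`. -/
noncomputable def rationalCurvePoints (e n : ℕ) : Fin (n + 1) → Fin 3 → ℂ :=
  Fin.cons ![0, 0, 1] fun i : Fin n => ![(i : ℂ), 1, (i : ℂ) ^ e]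

lemma dehomogenize_mem_ruledSystem {e n d : ℕ} {F : MvPolynomial (Fin 3) ℂ}
    (hF : F ∈ linSys (rationalCurvePoints e n) d (qh n (d - 4))) :
    dehomogenize F ∈
      ruledSystem e d 5 6 (∏ i : Fin n, (Polynomial.X - Polynomial.C ((i : ℕ) : ℂ))) := by
  obtain ⟨hd, hv⟩ := mem_linSys.mp hF
  have hv0 : VanishesToOrder ![0, 0, 1] (d - 4) F := by
    simpa [rationalCurvePoints, qh] using hv 0
  have hcoeff (i j : ℕ) (h : ∀ s, F.coeff s ≠ 0 → ¬ (s 0 = i ∧ s 2 = j)) :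
      ((dehomogenize F).coeff j).coeff i = 0 := by
    rw [coeff_coeff_dehomogenize]
    exact Finset.sum_eq_zero fun s hs => if_neg (h s (mem_support_iff.mp hs))
  refine ⟨fun j hj => ?_, fun j i hij => ?_, fun j => ?_⟩
  · ext i
    refine hcoeff i j fun s hs h => hs (hv0.coeff_eq_zero hd ?_)
    have := sum_eq_of_mem_support hd hs
    omega
  · refine hcoeff i j fun s hs h => ?_
    have := sum_eq_of_mem_support hd hs
    omega
  · rw [← Finset.prod_pow]
    refine Finset.prod_dvd_of_coprime ?_ fun i _ => pow_dvd_coeff_taylor_dehomogenize ?_ j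
    · intro a _ b _ hab
      refine IsCoprime.pow (Polynomial.isCoprime_X_sub_C_of_isUnit_sub ?_)
      rw [isUnit_iff_ne_zero, sub_ne_zero]
      exact_mod_cast fun h => hab (Fin.ext h)
    · simpa [rationalCurvePoints, qh] using hv i.succ

lemma finrank_linSys_rationalCurvePoints_le {e : ℕ} (c : ℕ) (he : 1 ≤ e) :
    Module.finrank ℂ (linSys (rationalCurvePoints e (2 * e)) (8 * e + c)
      (qh (2 * e) (8 * e + c - 4))) ≤ c - 3 + ((c - 2) + ((c - 1) + (c + (c + 1)))) := by
  refine Module.finrank_le_of_rank_le ?_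
  set W := linSys (rationalCurvePoints e (2 * e)) (8 * e + c) (qh (2 * e) (8 * e + c - 4))
  set H : Polynomial ℂ := ∏ i : Fin (2 * e), (Polynomial.X - Polynomial.C ((i : ℕ) : ℂ)) with hH
  have hmonic : H.Monic :=
    Polynomial.monic_prod_of_monic _ _ fun i _ => Polynomial.monic_X_sub_C _
  have hdeg : H.natDegree = 2 * e := by
    rw [hH, Polynomial.natDegree_prod_of_monic _ _ fun i _ => Polynomial.monic_X_sub_C _]
    simp only [Polynomial.natDegree_X_sub_C]
    simp
  refine le_trans ?_ (rank_ruledSystem_special he hmonic hdeg)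
  let f : W →ₗ[ℂ] ruledSystem e (8 * e + c) 5 6 H :=
    dehomogenize.toLinearMap.restrict fun F hF => dehomogenize_mem_ruledSystem hF
  refine LinearMap.rank_le_of_injective f ?_
  refine (injective_iff_map_eq_zero f).mpr ?_
  rintro ⟨F, hF⟩ hF0
  have hF0' : dehomogenize F = 0 := congrArg Subtype.val hF0
  have hd := (mem_linSys.mp hF).1
  refine Subtype.ext (MvPolynomial.ext _ _ fun s => ?_)
  by_contra hs
  have hs' : F.coeff s ≠ 0 := hs
  rw [← coeff_coeff_dehomogenize_eq_coeff hd (sum_eq_of_mem_support hd hs'), hF0'] at hs'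
  simp at hs'

lemma card_le_finrank_add_card {V ι κ : Type*} [AddCommGroup V] [Module ℂ V] [Fintype ι]
    [Fintype κ] {b : ι → V} (hb : LinearIndependent ℂ b) (φ : κ → V →ₗ[ℂ] ℂ) (W : Submodule ℂ V)
    [Module.Finite ℂ W]
    (hW : ∀ F ∈ Submodule.span ℂ (Set.range b), (∀ x, φ x F = 0) → F ∈ W) :
    Fintype.card ι ≤ Module.finrank ℂ W + Fintype.card κ := by
  set U := Submodule.span ℂ (Set.range b)
  have : Module.Finite ℂ U := Module.Finite.span_of_finite ℂ (Set.finite_range b)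
  let ψ : U →ₗ[ℂ] κ → ℂ := LinearMap.pi fun x => (φ x).comp U.subtype
  have hker : Module.finrank ℂ (LinearMap.ker ψ) ≤ Module.finrank ℂ W := by
    let g : LinearMap.ker ψ →ₗ[ℂ] W :=
      (U.subtype.comp (LinearMap.ker ψ).subtype).codRestrict W fun F =>
        hW _ F.1.2 fun x => congrFun F.2 x
    refine LinearMap.finrank_le_finrank_of_injective (f := g) fun F G h => ?_
    have h' : ((F : U) : V) = (G : U) := congrArg (fun x : W => (x : V)) h
    exact Subtype.ext (Subtype.ext h')
  have hrange : Module.finrank ℂ (LinearMap.range ψ) ≤ Fintype.card κ := by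
    simpa using Submodule.finrank_le (LinearMap.range ψ)
  have hsum := LinearMap.finrank_range_add_finrank_ker ψ
  have hfin : Module.finrank ℂ U = Fintype.card ι := finrank_span_eq_card hb
  omega

/-- The linear change of coordinates `F(x, y, z) ↦ F(q₂ x - q₀ z, q₂ y - q₁ z, z)`. -/
noncomputable def shear (q : Fin 3 → ℂ) : MvPolynomial (Fin 3) ℂ →ₐ[ℂ] MvPolynomial (Fin 3) ℂ :=
  aeval ![C (q 2) * X 0 - C (q 0) * X 2, C (q 2) * X 1 - C (q 1) * X 2, X 2]

lemma shear_injective {q : Fin 3 → ℂ} (hq : q 2 ≠ 0) : Function.Injective (shear q) := by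
  have hC : (C (q 2)⁻¹ * C (q 2) : MvPolynomial (Fin 3) ℂ) = 1 := by
    rw [← C_mul, inv_mul_cancel₀ hq, C_1]
  let σ : MvPolynomial (Fin 3) ℂ →ₐ[ℂ] MvPolynomial (Fin 3) ℂ :=
    aeval ![C (q 2)⁻¹ * (X 0 + C (q 0) * X 2), C (q 2)⁻¹ * (X 1 + C (q 1) * X 2), X 2]
  have h : σ.comp (shear q) = AlgHom.id ℂ _ := by
    refine MvPolynomial.algHom_ext fun i => ?_
    fin_cases i
    · simp [shear, σ, algHom_C, algebraMap_eq]
      linear_combination (X 0 + C (q 0) * X 2) * hC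
    · simp [shear, σ, algHom_C, algebraMap_eq]
      linear_combination (X 1 + C (q 1) * X 2) * hC
    · simp [shear, σ]
  exact Function.LeftInverse.injective (g := σ) fun F => DFunLike.congr_fun h F

/-- The exponent `(i, d - j - i, j)`. -/
noncomputable def exponent (d k : ℕ) (x : Σ j : Fin (k + 1), Fin (d - j + 1)) : Fin 3 →₀ ℕ :=
  Finsupp.equivFunOnFinite.symm ![x.2, d - x.1 - x.2, x.1]

lemma exponent_injective (d k : ℕ) : Function.Injective (exponent d k) := by
  rintro ⟨j, i⟩ ⟨j', i'⟩ h
  have h0 : (i : ℕ) = i' := DFunLike.congr_fun h 0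
  have h2 : (j : ℕ) = j' := DFunLike.congr_fun h 2
  obtain rfl := Fin.ext h2
  obtain rfl := Fin.ext h0
  rfl

/-- The form of degree `d` obtained from a monomial by moving `(0, 0, 1)` to the point `q`. -/
noncomputable def shearedMonomial (q : Fin 3 → ℂ) (d k : ℕ)
    (x : Σ j : Fin (k + 1), Fin (d - j + 1)) : MvPolynomial (Fin 3) ℂ :=
  shear q (monomial (exponent d k x) 1)

lemma linearIndependent_shearedMonomial {q : Fin 3 → ℂ} (hq : q 2 ≠ 0) (d k : ℕ) :
    LinearIndependent ℂ (shearedMonomial q d k) := by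
  have h := (basisMonomials (Fin 3) ℂ).linearIndependent.comp _ (exponent_injective d k)
  have h' := h.map' (shear q).toLinearMap (LinearMap.ker_eq_bot.mpr (shear_injective hq))
  rw [coe_basisMonomials] at h'
  exact h'

lemma shearedMonomial_eq (q : Fin 3 → ℂ) (d k : ℕ) (x : Σ j : Fin (k + 1), Fin (d - j + 1)) :
    shearedMonomial q d k x =
      (C (q 2) * X 0 - C (q 0) * X 2) ^ (x.2 : ℕ) *
        (C (q 2) * X 1 - C (q 1) * X 2) ^ (d - x.1 - x.2) * X 2 ^ (x.1 : ℕ) := by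
  rw [shearedMonomial, shear, aeval_monomial, Finsupp.prod_fintype _ _ (fun _ => pow_zero _),
    Fin.prod_univ_three]
  simp [exponent]

lemma isHomogeneous_shearedMonomial (q : Fin 3 → ℂ) {d k : ℕ} (hk : k ≤ d)
    (x : Σ j : Fin (k + 1), Fin (d - j + 1)) : (shearedMonomial q d k x).IsHomogeneous d := by
  have h (j : Fin 3) : (C (q 2) * X j - C (q j) * X 2).IsHomogeneous 1 :=
    (isHomogeneous_C_mul_X _ _).sub (isHomogeneous_C_mul_X _ _)
  rw [shearedMonomial_eq]
  convert (((h 0).pow (x.2 : ℕ)).mul ((h 1).pow (d - x.1 - x.2))).mul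
    ((isHomogeneous_X ℂ (2 : Fin 3)).pow (x.1 : ℕ)) using 1
  have := x.1.2
  have := x.2.2
  omega

lemma vanishesToOrder_shearedMonomial (q : Fin 3 → ℂ) {d k : ℕ}
    (x : Σ j : Fin (k + 1), Fin (d - j + 1)) :
    VanishesToOrder q (d - k) (shearedMonomial q d k x) := by
  have h (j : Fin 3) : VanishesToOrder q 1 (C (q 2) * X j - C (q j) * X 2) := by
    rw [VanishesToOrder.one_iff]
    simp [mul_comm]
  rw [shearedMonomial_eq]
  refine ((((h 0).pow (x.2 : ℕ)).mul ((h 1).pow (d - x.1 - x.2))).mul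
    (VanishesToOrder.zero_order q (X 2 ^ (x.1 : ℕ)))).mono ?_
  have := x.1.2
  have := x.2.2
  omega

lemma sum_le_finrank_linSys_add_card {n : ℕ} {p : Fin (n + 1) → Fin 3 → ℂ} (hp : p 0 2 ≠ 0)
    {d k m : ℕ} (hk : k ≤ d) {κ : Type*} [Fintype κ] (φ : κ → MvPolynomial (Fin 3) ℂ →ₗ[ℂ] ℂ)
    (hφ : ∀ F : MvPolynomial (Fin 3) ℂ, F.IsHomogeneous d → (∀ x, φ x F = 0) →
      ∀ i : Fin n, VanishesToOrder (p i.succ) m F) :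
    ∑ j : Fin (k + 1), (d - j + 1) ≤
      Module.finrank ℂ (linSys p d (Fin.cons (d - k) fun _ => m)) + Fintype.card κ := by
  have h := card_le_finrank_add_card (linearIndependent_shearedMonomial hp d k) φ
    (linSys p d (Fin.cons (d - k) fun _ => m)) fun F hF hF0 => ?_
  · simpa using h
  have hF' : F.IsHomogeneous d ∧ VanishesToOrder (p 0) (d - k) F := by
    clear hF0
    induction hF using Submodule.span_induction with
    | mem F hF =>
      obtain ⟨x, rfl⟩ := hF
      exact ⟨isHomogeneous_shearedMonomial _ hk x, vanishesToOrder_shearedMonomial _ x⟩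
    | zero =>
      refine ⟨isHomogeneous_zero _ _ _, ?_⟩
      simpa using (vanishesToOrder_shearedMonomial (p 0) (d := d) (k := k) ⟨0, 0⟩).smul 0
    | add F G _ _ hF hG => exact ⟨hF.1.add hG.1, hF.2.add hG.2⟩
    | smul c F _ hF => exact ⟨(homogeneousSubmodule (Fin 3) ℂ d).smul_mem c hF.1, hF.2.smul c⟩
  exact mem_linSys.mpr ⟨hF'.1, Fin.cases hF'.2 (hφ F hF'.1 hF0)⟩

lemma sum_le_finrank_linSys_simple {n : ℕ} {p : Fin (n + 1) → Fin 3 → ℂ} (hp : p 0 2 ≠ 0)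
    {d k : ℕ} (hk : k ≤ d) :
    ∑ j : Fin (k + 1), (d - j + 1) ≤
      Module.finrank ℂ (linSys p d (Fin.cons (d - k) fun _ => 1)) + n := by
  have h := sum_le_finrank_linSys_add_card hp hk (m := 1)
    (fun i : Fin n => (aeval (p i.succ)).toLinearMap) fun F _ hF i => by
      rw [VanishesToOrder.one_iff, ← aeval_eq_eval]
      exact hF i
  simpa using h

lemma sum_le_finrank_linSys_double {n : ℕ} {p : Fin (n + 1) → Fin 3 → ℂ} (hp : p 0 2 ≠ 0)
    {d k : ℕ} (hk : k ≤ d) (hd : d ≠ 0) :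
    ∑ j : Fin (k + 1), (d - j + 1) ≤
      Module.finrank ℂ (linSys p d (Fin.cons (d - k) fun _ => 2)) + n * 3 := by
  have h := sum_le_finrank_linSys_add_card hp hk (m := 2)
    (fun x : Fin n × Fin 3 => (aeval (p x.1.succ)).toLinearMap ∘ₗ (pderiv x.2).toLinearMap)
    fun F hFd hF i => by
      have h1 (j : Fin 3) : eval (p i.succ) (pderiv j F) = 0 := by
        rw [← aeval_eq_eval]
        exact hF (i, j)
      refine VanishesToOrder.succ_iff.mpr ⟨?_, fun j => VanishesToOrder.one_iff.mpr (h1 j)⟩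
      have h2 := congrArg (eval (p i.succ)) hFd.sum_X_mul_pderiv
      simpa [h1, hd] using h2.symm
  simpa using h

lemma le_finrank_linSys {e c r : ℕ} {p : Fin (2 * e + 1) → Fin 3 → ℂ} (he : 1 ≤ e) (hc : c ≤ 4)
    (hp : p 0 2 ≠ 0)
    (hr : r ≤ Module.finrank ℂ (linSys p (c * e + c) (Fin.cons (c * e) fun _ => c))) :
    r ≤ Module.finrank ℂ (linSys p (8 * e + c) (qh (2 * e) (8 * e + c - 4))) := by
  have exists_ne_zero {d : ℕ} {m : Fin (2 * e + 1) → ℕ}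
      (h : 0 < Module.finrank ℂ (linSys p d m)) : ∃ F ∈ linSys p d m, F ≠ 0 := by
    have := Module.nontrivial_of_finrank_pos h
    obtain ⟨F, hF⟩ := exists_ne (0 : linSys p d m)
    exact ⟨F, F.2, fun h => hF (Subtype.ext h)⟩
  obtain ⟨D, hD, hD0⟩ := exists_ne_zero (d := 2 * e) (m := Fin.cons (2 * e - 0) fun _ => 1) <| by
    have := sum_le_finrank_linSys_simple hp (d := 2 * e) (Nat.zero_le _)
    simp at this
    omega
  obtain ⟨E, hE, hE0⟩ := exists_ne_zero (d := e) (m := Fin.cons (e - 1) fun _ => 1) <| by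
    have := sum_le_finrank_linSys_simple hp he
    simp [Fin.sum_univ_succ] at this
    omega
  have hG := linSys_mul (linSys_pow hE (4 - c)) (linSys_pow hD 2)
  have hle := finrank_linSys_le_of_mul hG (mul_ne_zero (pow_ne_zero _ hE0) (pow_ne_zero _ hD0))
    (d := c * e + c) (m := Fin.cons (c * e) fun _ => c)
  refine hr.trans (hle.trans_eq ?_)
  have hce : (4 - c) * e + c * e = 4 * e := by rw [← add_mul, Nat.sub_add_cancel hc]
  have hd : (4 - c) * e + 2 * (2 * e) + (c * e + c) = 8 * e + c := by omega
  have hm : (((4 - c) • Fin.cons (e - 1) fun _ => 1) + 2 • Fin.cons (2 * e - 0) fun _ => 1) +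
      (Fin.cons (c * e) fun _ => c) = qh (2 * e) (8 * e + c - 4) := by
    refine _root_.funext (Fin.cases ?_ fun i => ?_)
    · have : 4 - c ≤ (4 - c) * e := Nat.le_mul_of_pos_right _ he
      simp [qh, Nat.mul_sub]
      omega
    · simp [qh]
      omega
  rw [hd, hm]

lemma virtDim_qh (d n m : ℕ) :
    virtDim d (qh n m) = (d : ℤ) * (d + 3) / 2 - ((m : ℤ) * (m + 1) / 2 + n * 21) := by
  simp [virtDim, qh, Fin.sum_univ_succ]

lemma le_finrank_linSys_constant {n : ℕ} (p : Fin n → Fin 3 → ℂ) :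
    1 ≤ Module.finrank ℂ (linSys p 0 0) := by
  have h1 : (1 : MvPolynomial (Fin 3) ℂ) ∈ linSys p 0 0 :=
    mem_linSys.mpr ⟨isHomogeneous_one _ _, fun i => VanishesToOrder.zero_order _ _⟩
  have : Nontrivial (linSys p 0 0) :=
    ⟨⟨1, h1⟩, 0, fun h => one_ne_zero (congrArg Subtype.val h)⟩
  exact Module.finrank_pos

lemma exists_generic_finrank_linSys_eq {e c r : ℕ} (he : 1 ≤ e) (hc : c ≤ 4)
    (hr : c - 3 + ((c - 2) + ((c - 1) + (c + (c + 1)))) = r)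
    (hle : ∀ p : Fin (2 * e + 1) → Fin 3 → ℂ, p 0 2 ≠ 0 →
      r ≤ Module.finrank ℂ (linSys p (c * e + c) (Fin.cons (c * e) fun _ => c))) :
    ∃ P : MvPolynomial (Fin (2 * e + 1) × Fin 3) ℂ, P ≠ 0 ∧
      ∀ p : Fin (2 * e + 1) → Fin 3 → ℂ, eval (fun x => p x.1 x.2) P ≠ 0 →
        Module.finrank ℂ (linSys p (8 * e + c) (qh (2 * e) (8 * e + c - 4))) = r := by
  obtain ⟨P, hP, h⟩ := exists_generic_finrank_linSys_le _ _ _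
    (finrank_linSys_rationalCurvePoints_le c he)
  refine ⟨P * X (0, 2), mul_ne_zero hP (X_ne_zero _), fun p hp => ?_⟩
  rw [map_mul, eval_X, mul_ne_zero_iff] at hp
  exact ((h p hp.1).trans_eq hr).antisymm (le_finrank_linSys he hc hp.2 (hle p hp.2))

theorem special_L_8e_families (e : ℕ) (he : 1 ≤ e) :
    virtDim (8 * e) (qh (2 * e) (8 * e - 4)) = -2 * (e : ℤ) - 6 ∧
    virtDim (8 * e + 1) (qh (2 * e) (8 * e - 3)) = -2 * (e : ℤ) - 1 ∧
    virtDim (8 * e + 2) (qh (2 * e) (8 * e - 2)) = -2 * (e : ℤ) + 4 ∧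
    Generically (2 * e + 1) (fun p =>
      (projDim p (8 * e) (qh (2 * e) (8 * e - 4)) = 0 ∧
        projDim p (8 * e) (qh (2 * e) (8 * e - 4)) >
          max (-1) (virtDim (8 * e) (qh (2 * e) (8 * e - 4)))) ∧
      (projDim p (8 * e + 1) (qh (2 * e) (8 * e - 3)) = 2 ∧
        projDim p (8 * e + 1) (qh (2 * e) (8 * e - 3)) >
          max (-1) (virtDim (8 * e + 1) (qh (2 * e) (8 * e - 3)))) ∧
      (projDim p (8 * e + 2) (qh (2 * e) (8 * e - 2)) = 5 ∧
        projDim p (8 * e + 2) (qh (2 * e) (8 * e - 2)) >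
          max (-1) (virtDim (8 * e + 2) (qh (2 * e) (8 * e - 2))))) := by
  have hv0 : virtDim (8 * e) (qh (2 * e) (8 * e - 4)) = -2 * (e : ℤ) - 6 := by
    rw [virtDim_qh]
    push_cast [show 4 ≤ 8 * e by omega]
    have h1 : (8 * e : ℤ) * (8 * e + 3) = 2 * (4 * e * (8 * e + 3)) := by ring
    have h2 : (8 * e - 4 : ℤ) * (8 * e - 4 + 1) = 2 * ((4 * e - 2) * (8 * e - 3)) := by ring
    rw [h1, h2, Int.mul_ediv_cancel_left _ two_ne_zero, Int.mul_ediv_cancel_left _ two_ne_zero]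
    ring
  have hv1 : virtDim (8 * e + 1) (qh (2 * e) (8 * e - 3)) = -2 * (e : ℤ) - 1 := by
    rw [virtDim_qh]
    push_cast [show 3 ≤ 8 * e by omega]
    have h1 : (8 * e + 1 : ℤ) * (8 * e + 1 + 3) = 2 * ((8 * e + 1) * (4 * e + 2)) := by ring
    have h2 : (8 * e - 3 : ℤ) * (8 * e - 3 + 1) = 2 * ((8 * e - 3) * (4 * e - 1)) := by ring
    rw [h1, h2, Int.mul_ediv_cancel_left _ two_ne_zero, Int.mul_ediv_cancel_left _ two_ne_zero]
    ring
  have hv2 : virtDim (8 * e + 2) (qh (2 * e) (8 * e - 2)) = -2 * (e : ℤ) + 4 := by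
    rw [virtDim_qh]
    push_cast [show 2 ≤ 8 * e by omega]
    have h1 : (8 * e + 2 : ℤ) * (8 * e + 2 + 3) = 2 * ((4 * e + 1) * (8 * e + 5)) := by ring
    have h2 : (8 * e - 2 : ℤ) * (8 * e - 2 + 1) = 2 * ((4 * e - 1) * (8 * e - 1)) := by ring
    rw [h1, h2, Int.mul_ediv_cancel_left _ two_ne_zero, Int.mul_ediv_cancel_left _ two_ne_zero]
    ring
  obtain ⟨P₀, hP₀, h₀⟩ := exists_generic_finrank_linSys_eq (c := 0) (r := 1) he (by norm_num)
    (by norm_num) fun p _ => by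
      have h : (Fin.cons (0 * e) fun _ => 0 : Fin (2 * e + 1) → ℕ) = 0 :=
        _root_.funext (Fin.cases (zero_mul e) fun _ => rfl)
      rw [h, zero_mul]
      exact le_finrank_linSys_constant p
  obtain ⟨P₁, hP₁, h₁⟩ := exists_generic_finrank_linSys_eq (c := 1) (r := 3) he (by norm_num)
    (by norm_num) fun p hp => by
      have := sum_le_finrank_linSys_simple hp (d := 1 * e + 1) (k := 1) (by omega)
      rw [Nat.add_sub_cancel] at this
      simp [Fin.sum_univ_succ] at this
      omega
  obtain ⟨P₂, hP₂, h₂⟩ := exists_generic_finrank_linSys_eq (c := 2) (r := 6) he (by norm_num)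
    (by norm_num) fun p hp => by
      have := sum_le_finrank_linSys_double hp (d := 2 * e + 2) (k := 2) (by omega) (by omega)
      rw [Nat.add_sub_cancel] at this
      simp [Fin.sum_univ_succ] at this
      omega
  refine ⟨hv0, hv1, hv2, P₀ * P₁ * P₂, mul_ne_zero (mul_ne_zero hP₀ hP₁) hP₂, fun p _ hp => ?_⟩
  rw [map_mul, map_mul, mul_ne_zero_iff, mul_ne_zero_iff] at hp
  have hd₀ := h₀ p hp.1.1
  have hd₁ := h₁ p hp.1.2
  have hd₂ := h₂ p hp.2
  rw [add_zero] at hd₀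
  rw [show 8 * e + 1 - 4 = 8 * e - 3 by omega] at hd₁
  rw [show 8 * e + 2 - 4 = 8 * e - 2 by omega] at hd₂
  rw [hv0, hv1, hv2, projDim, projDim, projDim, hd₀, hd₁, hd₂]
  omega
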